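/- Let n agents have demands d_1, …, d_n > 0 and supply S > 0, and suppose the agents can be packed into k bins: there is a partition of {1,…,n} into sets B_1, …, B_k such that for each j, the sum of d_i over i ∈ B_j is at most S. Then there exists a feasible allocation X_1, …, X_n of [0,T] with λ(X_i) = T/k for every agent i; that is, a bin-packing solution with k bins yields an allocation connecting every agent a 1/k fraction of the time. -/

import Mathlib

open MeasureTheory Set

/-! Cut `[0, T)` into `k` slots of length `T / k` and serve bin `j` during slot `j`. At any instant
at most one bin is being served, so the total consumption is the load of that bin (or zero, at
time `T`), while an agent lying in `q` of the bins is connected for exactly `q` slots. -/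

open scoped Function Finset

section ConnectedSet

variable {ι κ α M : Type*} {B : κ → Finset ι} {slot : κ → Set α}

/-- The allocation induced by a family of bins `B` when all members of bin `j` are connected
throughout `slot j`: the set of times at which agent `i` is connected. The bins may overlap. -/
def connectedSet (B : κ → Finset ι) (slot : κ → Set α) (i : ι) : Set α :=
  ⋃ j, ⋃ (_ : i ∈ B j), slot j

theorem mem_connectedSet {i : ι} {t : α} :
    t ∈ connectedSet B slot i ↔ ∃ j, i ∈ B j ∧ t ∈ slot j := by
  simp only [connectedSet, mem_iUnion, exists_prop]

theorem connectedSet_subset {A : Set α} (hslot : ∀ j, slot j ⊆ A) (i : ι) :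
    connectedSet B slot i ⊆ A :=
  iUnion₂_subset fun j _ => hslot j

theorem mem_connectedSet_iff_mem_bin (hdisj : Pairwise (Disjoint on slot)) {t : α} {j : κ}
    (ht : t ∈ slot j) {i : ι} : t ∈ connectedSet B slot i ↔ i ∈ B j := by
  refine ⟨fun hi => ?_, fun hi => mem_connectedSet.2 ⟨j, hi, ht⟩⟩
  obtain ⟨j', hi, ht'⟩ := mem_connectedSet.1 hi
  obtain rfl : j' = j := hdisj.eq (not_disjoint_iff.2 ⟨t, ht', ht⟩)
  exact hi

section Load

variable [Fintype ι] [AddCommMonoid M]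

theorem sum_indicator_connectedSet (hdisj : Pairwise (Disjoint on slot)) (d : ι → M) {t : α}
    {j : κ} (ht : t ∈ slot j) :
    ∑ i, (connectedSet B slot i).indicator (fun _ => d i) t = ∑ i ∈ B j, d i := by
  classical
  simp only [indicator_apply, mem_connectedSet_iff_mem_bin hdisj ht, Finset.sum_ite_mem,
    Finset.univ_inter]

theorem sum_indicator_connectedSet_le [Preorder M] (hdisj : Pairwise (Disjoint on slot))
    {d : ι → M} {S : M} (hS : 0 ≤ S) (hcap : ∀ j, ∑ i ∈ B j, d i ≤ S) (t : α) :
    ∑ i, (connectedSet B slot i).indicator (fun _ => d i) t ≤ S := by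
  by_cases ht : ∃ j, t ∈ slot j
  · obtain ⟨j, hj⟩ := ht
    exact (sum_indicator_connectedSet hdisj d hj).trans_le (hcap j)
  · have hidle (i : ι) : t ∉ connectedSet B slot i := fun hi =>
      ht ((mem_connectedSet.1 hi).imp fun _ => And.right)
    exact (Finset.sum_eq_zero fun i _ => indicator_of_notMem (hidle i) _).trans_le hS

end Load

section Measure

variable [MeasurableSpace α]

theorem measurableSet_connectedSet [Countable κ] (hslot : ∀ j, MeasurableSet (slot j)) (i : ι) :
    MeasurableSet (connectedSet B slot i) :=
  .iUnion fun j => .iUnion fun _ => hslot j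

theorem measure_connectedSet [Fintype κ] [DecidableEq ι] (μ : Measure α)
    (hdisj : Pairwise (Disjoint on slot)) (hslot : ∀ j, MeasurableSet (slot j)) (i : ι) :
    μ (connectedSet B slot i) = ∑ j with i ∈ B j, μ (slot j) := by
  rw [← measure_biUnion_finset (hdisj.set_pairwise _) fun j _ => hslot j]
  simp only [connectedSet, Finset.mem_filter_univ]

end Measure

end ConnectedSet

/-- The `j`-th, counting from `0`, of the `k` consecutive slots of equal length into which `[0, T)`
is cut. Slots are half-open, so that they are disjoint; the instant `T` belongs to none. -/
def timeSlot (T : ℝ) (k : ℕ) (j : Fin k) : Set ℝ :=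
  Ico (j * (T / k)) ((j + 1) * (T / k))

section TimeSlot

variable {T : ℝ} {k : ℕ}

theorem measurableSet_timeSlot (j : Fin k) : MeasurableSet (timeSlot T k j) :=
  measurableSet_Ico

theorem volume_timeSlot (j : Fin k) : volume (timeSlot T k j) = ENNReal.ofReal (T / k) := by
  rw [timeSlot, Real.volume_Ico, add_one_mul, add_sub_cancel_left]

theorem timeSlot_subset_Icc (hT : 0 ≤ T) (j : Fin k) : timeSlot T k j ⊆ Icc 0 T := by
  have hk : (k : ℝ) ≠ 0 := mod_cast j.pos.ne'
  have hj : (j + 1 : ℝ) ≤ k := mod_cast j.isLt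
  refine Ico_subset_Icc_self.trans (Icc_subset_Icc (by positivity) ?_)
  calc (j + 1) * (T / k) ≤ k * (T / k) := by gcongr
    _ = T := mul_div_cancel₀ T hk

theorem pairwise_disjoint_timeSlot : Pairwise (Disjoint on timeSlot T k) := by
  intro i j hij
  have hij' : (i : ℤ) ≠ j := mod_cast Fin.val_ne_of_ne hij
  simpa [timeSlot, Function.onFun] using pairwise_disjoint_Ico_zsmul (T / k) hij'

end TimeSlot

theorem bin_packing_allocation_general {ι M : Type*} [Fintype ι] [DecidableEq ι]
    [AddCommMonoid M] [Preorder M] (k : ℕ) (d : ι → M) {S : M} {T : ℝ} (hS : 0 ≤ S) (hT : 0 ≤ T)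
    (B : Fin k → Finset ι) (hcap : ∀ j, ∑ i ∈ B j, d i ≤ S) :
    ∃ X : ι → Set ℝ,
      (∀ i, MeasurableSet (X i)) ∧
      (∀ i, X i ⊆ Icc 0 T) ∧
      (∀ t ∈ Icc (0 : ℝ) T, ∑ i, (X i).indicator (fun _ => d i) t ≤ S) ∧
      (∀ i, volume (X i) = #{j | i ∈ B j} * ENNReal.ofReal (T / k)) := by
  refine ⟨connectedSet B (timeSlot T k), measurableSet_connectedSet measurableSet_timeSlot,
    connectedSet_subset (timeSlot_subset_Icc hT),
    fun t _ => sum_indicator_connectedSet_le pairwise_disjoint_timeSlot hS hcap t, fun i => ?_⟩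
  rw [measure_connectedSet volume pairwise_disjoint_timeSlot measurableSet_timeSlot]
  simp only [volume_timeSlot, Finset.sum_const, nsmul_eq_mul]

/-- A bin-packing solution with `k` bins of capacity `S` yields a feasible allocation
connecting every agent exactly a `1/k` fraction of the time. -/
theorem bin_packing_allocation
    (n k : ℕ) (d : Fin n → ℝ) (S T : ℝ)
    (hd : ∀ i, 0 < d i) (hS : 0 < S) (hT : 0 < T)
    (B : Fin k → Finset (Fin n))
    (hpart : ∀ i, ∃! j, i ∈ B j)
    (hcap : ∀ j, ∑ i ∈ B j, d i ≤ S) :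
    ∃ X : Fin n → Set ℝ,
      (∀ i, MeasurableSet (X i)) ∧
      (∀ i, X i ⊆ Set.Icc 0 T) ∧
      (∀ t ∈ Set.Icc (0 : ℝ) T, ∑ i, (X i).indicator (fun _ => d i) t ≤ S) ∧
      (∀ i, volume (X i) = ENNReal.ofReal (T / (k : ℝ))) := by
  have hcard (i : Fin n) : #{j | i ∈ B j} = 1 := (Fintype.existsUnique_iff_card_one _).1 (hpart i)
  simpa only [hcard, Nat.cast_one, one_mul] using
    bin_packing_allocation_general k d hS.le hT.le B hcap
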